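/- Let p ∈ Δ*_m, q ∈ Δ*_n, c ∈ ℝ^{m×n}, and let α > 0, β > 0. Let π^reg be the unique minimizer over Γ(*,q) of F^reg(π) = ⟨c,π⟩ + (1/α) KL(π𝟙|p) + (1/β) KL(π|π^ref). Then ‖π^reg𝟙 − p‖₁ ≤ (2αβ/(α+β)) · (4‖log p‖_∞/β + ‖c‖_osc). -/

import Mathlib

open Finset Filter Topology ENNReal

noncomputable section

/-- Frobenius inner product `⟨c, π⟩ = ∑_{ij} c_ij π_ij`. -/
def frob {m n : ℕ} (c π : Matrix (Fin m) (Fin n) ℝ) : ℝ := ∑ i, ∑ j, c i j * π i j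

/-- Row sums `π𝟙`. -/
def rowSum {m n : ℕ} (π : Matrix (Fin m) (Fin n) ℝ) : Fin m → ℝ := fun i => ∑ j, π i j

/-- Column sums `πᵀ𝟙`. -/
def colSum {m n : ℕ} (π : Matrix (Fin m) (Fin n) ℝ) : Fin n → ℝ := fun j => ∑ i, π i j

/-- Kullback–Leibler divergence between nonnegative vectors. -/
def KLvec {k : ℕ} (a b : Fin k → ℝ) : ℝ := ∑ i, (a i * Real.log (a i / b i) - a i + b i)

/-- Kullback–Leibler divergence between nonnegative matrices. -/
def KLmat {m n : ℕ} (a b : Matrix (Fin m) (Fin n) ℝ) : ℝ :=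
  ∑ i, ∑ j, (a i j * Real.log (a i j / b i j) - a i j + b i j)

/-- The tipless simplex `Δ*_k`: strictly positive entries summing to 1. -/
def simplexPos (k : ℕ) : Set (Fin k → ℝ) := {p | (∀ i, 0 < p i) ∧ ∑ i, p i = 1}

/-- The simplex `Δ_k`: nonnegative entries summing to 1. -/
def simplexNN (k : ℕ) : Set (Fin k → ℝ) := {p | (∀ i, 0 ≤ p i) ∧ ∑ i, p i = 1}

/-- Transport plans `Γ(p, q)`. -/
def Gamma {m n : ℕ} (p : Fin m → ℝ) (q : Fin n → ℝ) : Set (Matrix (Fin m) (Fin n) ℝ) :=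
  {π | (∀ i j, 0 ≤ π i j) ∧ rowSum π = p ∧ colSum π = q}

/-- Half-relaxed plans `Γ(*, q)`. -/
def GammaStar {m n : ℕ} (q : Fin n → ℝ) : Set (Matrix (Fin m) (Fin n) ℝ) :=
  {π | (∀ i j, 0 ≤ π i j) ∧ colSum π = q}

/-- Reference plan `π^ref = (mn)⁻¹ 𝟙𝟙ᵀ`. -/
def piRef (m n : ℕ) : Matrix (Fin m) (Fin n) ℝ := fun _ _ => 1 / (m * n)

/-- Optimal transport value `OT(p,q)`. -/
def OTval {m n : ℕ} (c : Matrix (Fin m) (Fin n) ℝ) (p : Fin m → ℝ) (q : Fin n → ℝ) : ℝ :=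
  ⨅ π : Gamma p q, frob c π.1

/-- Entropic OT objective `⟨c,π⟩ + β⁻¹ KL(π|π^ref)`. -/
def eotObj {m n : ℕ} (c : Matrix (Fin m) (Fin n) ℝ) (β : ℝ) (π : Matrix (Fin m) (Fin n) ℝ) : ℝ :=
  frob c π + β⁻¹ * KLmat π (piRef m n)

/-- Entropic OT value `EOT_β(p,q)`. -/
def eotVal {m n : ℕ} (c : Matrix (Fin m) (Fin n) ℝ) (β : ℝ) (p : Fin m → ℝ) (q : Fin n → ℝ) : ℝ :=
  ⨅ π : Gamma p q, eotObj c β π.1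

/-- Gibbs kernel `K = e^{-βc}` (entrywise). -/
def gibbs {m n : ℕ} (c : Matrix (Fin m) (Fin n) ℝ) (β : ℝ) : Matrix (Fin m) (Fin n) ℝ :=
  fun i j => Real.exp (-(β * c i j))

/-- Annealed Sinkhorn scaling vectors `(a_t, b_t)`:
`b_0 = 𝟙`, `a_{t+1} = p ⊘ (K_t b_t)`, `b_{t+1} = q ⊘ (K_{t+1}ᵀ a_{t+1})`, `K_t = e^{-β_t c}`. -/
def sinkAB {m n : ℕ} (p : Fin m → ℝ) (q : Fin n → ℝ) (c : Matrix (Fin m) (Fin n) ℝ)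
    (β : ℕ → ℝ) : ℕ → (Fin m → ℝ) × (Fin n → ℝ)
  | 0 => (fun _ => 1, fun _ => 1)
  | t + 1 =>
    let prev := sinkAB p q c β t
    let a : Fin m → ℝ := fun i => p i / ∑ j, gibbs c (β t) i j * prev.2 j
    (a, fun j => q j / ∑ i, gibbs c (β (t + 1)) i j * a i)

/-- Annealed Sinkhorn primal iterate `π_t = diag(a_t) K_t diag(b_t)`. -/
def sinkPlan {m n : ℕ} (p : Fin m → ℝ) (q : Fin n → ℝ) (c : Matrix (Fin m) (Fin n) ℝ)
    (β : ℕ → ℝ) (t : ℕ) : Matrix (Fin m) (Fin n) ℝ :=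
  fun i j => (sinkAB p q c β t).1 i * gibbs c (β t) i j * (sinkAB p q c β t).2 j

/-- `ℓ¹` norm of a vector. -/
def l1vec {k : ℕ} (a : Fin k → ℝ) : ℝ := ∑ i, |a i|

/-- Oscillation semi-norm `‖c‖_osc = max c - min c`. -/
def cOsc {m n : ℕ} (c : Matrix (Fin m) (Fin n) ℝ) : ℝ :=
  (⨆ i, ⨆ j, c i j) - ⨅ i, ⨅ j, c i j

/-- `‖log p‖_∞`. -/
def logSup {k : ℕ} (p : Fin k → ℝ) : ℝ := ⨆ i, |Real.log (p i)|

/-- The rounding ("projection") procedure of Altschuler et al. (Algorithm 3). -/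
def roundPlan {m n : ℕ} (p : Fin m → ℝ) (q : Fin n → ℝ) (π : Matrix (Fin m) (Fin n) ℝ) :
    Matrix (Fin m) (Fin n) ℝ :=
  let π' : Matrix (Fin m) (Fin n) ℝ := fun i j => min 1 (p i / rowSum π i) * π i j
  let π'' : Matrix (Fin m) (Fin n) ℝ := fun i j => π' i j * min 1 (q j / colSum π' j)
  fun i j => π'' i j +
    (p i - rowSum π'' i) * (q j - colSum π'' j) / l1vec (fun i' => p i' - rowSum π'' i')

/-- Relaxed entropic objective `F^reg(π) = ⟨c,π⟩ + α⁻¹ KL(π𝟙|p) + β⁻¹ KL(π|π^ref)`. -/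
def Freg {m n : ℕ} (c : Matrix (Fin m) (Fin n) ℝ) (p : Fin m → ℝ) (α β : ℝ)
    (π : Matrix (Fin m) (Fin n) ℝ) : ℝ :=
  frob c π + α⁻¹ * KLvec (rowSum π) p + β⁻¹ * KLmat π (piRef m n)

/-- Dual functional for the relaxed entropic problem. -/
def dualFun {m n : ℕ} (p : Fin m → ℝ) (q : Fin n → ℝ) (c : Matrix (Fin m) (Fin n) ℝ)
    (α β : ℝ) (u : Fin m → ℝ) (v : Fin n → ℝ) : ℝ :=
  α⁻¹ * (∑ i, (1 - Real.exp (-(α * u i))) * p i) + ∑ j, v j * q j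
    - β⁻¹ * (∑ i, ∑ j, Real.exp (β * (u i + v j - c i j)) * piRef m n i j) + β⁻¹

/-- Dual functional of entropic OT. -/
def eotDual {m n : ℕ} (p : Fin m → ℝ) (q : Fin n → ℝ) (c : Matrix (Fin m) (Fin n) ℝ)
    (β : ℝ) (u : Fin m → ℝ) (v : Fin n → ℝ) : ℝ :=
  ∑ i, p i * u i + ∑ j, q j * v j
    + β⁻¹ * (1 - ∑ i, ∑ j, piRef m n i j * Real.exp (β * (u i + v j - c i j)))

/-- The set `C_β` of plans of the form `diag(a) e^{-βc} diag(b)` with `a, b ≥ 0`. -/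
def scalingSet {m n : ℕ} (c : Matrix (Fin m) (Fin n) ℝ) (β : ℝ) :
    Set (Matrix (Fin m) (Fin n) ℝ) :=
  {π | ∃ a : Fin m → ℝ, ∃ b : Fin n → ℝ, (∀ i, 0 ≤ a i) ∧ (∀ j, 0 ≤ b j) ∧
    π = fun i j => a i * Real.exp (-(β * c i j)) * b j}


lemma phi_convex (b x y t : ℝ) (hb : 0 < b) (hx : 0 ≤ x) (hy : 0 ≤ y) (ht0 : 0 ≤ t) (ht1 : t ≤ 1) :
    ((1-t)*x+t*y) * Real.log (((1-t)*x+t*y)/b) - ((1-t)*x+t*y) + b ≤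
      (1-t) * (x * Real.log (x/b) - x + b) + t * (y * Real.log (y/b) - y + b) := by
  have hxb : x / b ∈ Set.Ici (0:ℝ) := Set.mem_Ici.2 (by positivity)
  have hyb : y / b ∈ Set.Ici (0:ℝ) := Set.mem_Ici.2 (by positivity)
  have h := Real.convexOn_mul_log.2 hxb hyb (sub_nonneg.2 ht1) ht0 (by ring)
  simp only [smul_eq_mul] at h
  have e : (1-t)*(x/b)+t*(y/b) = ((1-t)*x+t*y)/b := by ring
  rw [e] at h
  have h2 := mul_le_mul_of_nonneg_left h hb.le
  have e1 : b * (((1-t)*x+t*y)/b * Real.log (((1-t)*x+t*y)/b)) =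
    ((1-t)*x+t*y) * Real.log (((1-t)*x+t*y)/b) := by field_simp
  have e2 : b * ((1-t)*(x/b * Real.log (x/b)) + t * (y/b * Real.log (y/b))) =
    (1-t)*(x * Real.log (x/b)) + t * (y * Real.log (y/b)) := by field_simp
  rw [e1, e2] at h2
  linarith

lemma phi_zero (b y t : ℝ) (hb : 0 < b) (hy : 0 < y) (ht0 : 0 < t) :
    ((1-t)*0+t*y) * Real.log (((1-t)*0+t*y)/b) - ((1-t)*0+t*y) + b =
      (1-t) * (0 * Real.log (0/b) - 0 + b) + t * (y * Real.log (y/b) - y + b)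
        + t * y * Real.log t := by
  have : ((1-t)*0+t*y)/b = t * (y/b) := by ring
  rw [this, Real.log_mul ht0.ne' (by positivity)]
  ring

lemma rowSum_comb {m n : ℕ} (π π0 : Matrix (Fin m) (Fin n) ℝ) (s t : ℝ) (i : Fin m) :
    rowSum (fun i j => s * π i j + t * π0 i j : Matrix (Fin m) (Fin n) ℝ) i
      = s * rowSum π i + t * rowSum π0 i := by
  simp only [rowSum, Finset.sum_add_distrib, Finset.mul_sum]

lemma reg_pos {m n : ℕ} (p : Fin m → ℝ) (q : Fin n → ℝ) (c : Matrix (Fin m) (Fin n) ℝ)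
    (hp : p ∈ simplexPos m) (hq : q ∈ simplexPos n)
    (α β : ℝ) (hα : 0 < α) (hβ : 0 < β)
    (π : Matrix (Fin m) (Fin n) ℝ)
    (hmem : π ∈ GammaStar q)
    (hopt : ∀ π' ∈ GammaStar (m := m) q, Freg c p α β π ≤ Freg c p α β π')
    (a : Fin m) (b : Fin n) : 0 < π a b := by
  have hm : (0:ℝ) < m := by exact_mod_cast a.pos
  have hn : (0:ℝ) < n := by exact_mod_cast b.pos
  obtain ⟨hnn, hcol⟩ := hmem
  refine lt_of_le_of_ne (hnn a b) fun h0 => ?_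
  set π0 : Matrix (Fin m) (Fin n) ℝ := fun _ j => q j / m with hπ0
  have hπ0pos : ∀ i j, 0 < π0 i j := fun i j => div_pos (hq.1 j) hm
  have href : ∀ i j, 0 < piRef m n i j := fun i j => by unfold piRef; positivity
  have key : ∀ t : ℝ, 0 < t → t ≤ 1 →
      0 ≤ t * (Freg c p α β π0 - Freg c p α β π + β⁻¹ * (π0 a b * Real.log t)) := by
    intro t ht0 ht1
    set πt : Matrix (Fin m) (Fin n) ℝ := fun i j => (1-t) * π i j + t * π0 i j with hπt
    have h1 := hopt πt ⟨fun i j => add_nonneg (mul_nonneg (by linarith) (hnn i j))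
      (mul_nonneg ht0.le (hπ0pos i j).le), by
        funext j
        have hj := congrFun hcol j
        simp only [colSum] at hj ⊢
        simp only [hπt, hπ0, Finset.sum_add_distrib, ← Finset.mul_sum, hj]
        simp
        field_simp
        ring⟩
    have hf : frob c πt = (1-t) * frob c π + t * frob c π0 := by
      simp only [frob, hπt, Finset.mul_sum, ← Finset.sum_add_distrib]
      refine Finset.sum_congr rfl fun i _ => Finset.sum_congr rfl fun j _ => by ring
    have hv : KLvec (rowSum πt) p ≤ (1-t) * KLvec (rowSum π) p + t * KLvec (rowSum π0) p := by
      simp only [KLvec, Finset.mul_sum, ← Finset.sum_add_distrib]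
      refine Finset.sum_le_sum fun i _ => ?_
      rw [hπt, rowSum_comb]
      exact phi_convex _ _ _ _ (hp.1 i) (Finset.sum_nonneg fun j _ => hnn i j)
        (Finset.sum_nonneg fun j _ => (hπ0pos i j).le) ht0.le ht1
    have hk : KLmat πt (piRef m n) ≤ (1-t) * KLmat π (piRef m n) + t * KLmat π0 (piRef m n)
        + t * π0 a b * Real.log t := by
      have e : t * π0 a b * Real.log t = ∑ i, ∑ j, if i = a ∧ j = b then t * π0 a b * Real.log t else 0 := by
        rw [Finset.sum_eq_single a, Finset.sum_eq_single b]
        · simp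
        · intro j _ hj; simp [hj]
        · simp
        · intro i _ hi; simp [hi]
        · simp
      rw [e]
      simp only [KLmat, Finset.mul_sum, ← Finset.sum_add_distrib]
      refine Finset.sum_le_sum fun i _ => Finset.sum_le_sum fun j _ => ?_
      split_ifs with hij
      · obtain ⟨rfl, rfl⟩ := hij
        have := phi_zero (piRef m n i j) (π0 i j) t (href i j) (hπ0pos i j) ht0
        rw [h0] at this
        exact this.le
      · rw [add_zero]
        exact phi_convex _ _ _ _ (href i j) (hnn i j) (hπ0pos i j).le ht0.le ht1
    have hv' := mul_le_mul_of_nonneg_left hv (inv_pos.2 hα).le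
    have hk' := mul_le_mul_of_nonneg_left hk (inv_pos.2 hβ).le
    simp only [Freg] at h1 ⊢
    rw [hf] at h1
    nlinarith
  have hC : 0 ≤ Freg c p α β π0 - Freg c p α β π := by
    have := key 1 one_pos le_rfl
    simpa using this
  set C := Freg c p α β π0 - Freg c p α β π
  have hx := hπ0pos a b
  have hs : 0 < (C + 1) * β / π0 a b := by positivity
  have := key (Real.exp (-((C+1) * β / π0 a b))) (Real.exp_pos _) (Real.exp_le_one_iff.2 (by linarith))
  have h2 := nonneg_of_mul_nonneg_right this (Real.exp_pos _)
  rw [Real.log_exp] at h2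
  have e : β⁻¹ * (π0 a b * -((C+1) * β / π0 a b)) = -(C+1) := by
    field_simp
  rw [e] at h2
  linarith

lemma phi_deriv (b x e : ℝ) (hb : 0 < b) (hx : 0 < x) :
    HasDerivAt (fun t : ℝ => (x + t * e) * Real.log ((x + t * e)/b) - (x + t * e) + b)
      (e * Real.log (x / b)) 0 := by
  have h1 : HasDerivAt (fun t : ℝ => x + t * e) e 0 := by
    simpa using ((hasDerivAt_id (0:ℝ)).mul_const e).const_add x
  have h2 := (h1.div_const b).log (by simp; constructor <;> positivity)
  have h3 := ((h1.mul h2).sub h1).add_const b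
  refine h3.congr_deriv ?_
  simp
  field_simp
  ring

lemma reg_foc {m n : ℕ} (p : Fin m → ℝ) (q : Fin n → ℝ) (c : Matrix (Fin m) (Fin n) ℝ)
    (hp : p ∈ simplexPos m)
    (α β : ℝ)
    (π : Matrix (Fin m) (Fin n) ℝ)
    (hmem : π ∈ GammaStar q)
    (hopt : ∀ π' ∈ GammaStar (m := m) q, Freg c p α β π ≤ Freg c p α β π')
    (hpos : ∀ i j, 0 < π i j)
    (E : Matrix (Fin m) (Fin n) ℝ) (hE : colSum E = 0) :
    (∑ i, ∑ j, c i j * E i j) + α⁻¹ * (∑ i, rowSum E i * Real.log (rowSum π i / p i))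
      + β⁻¹ * (∑ i, ∑ j, E i j * Real.log (π i j / piRef m n i j)) = 0 := by
  have hder : HasDerivAt (fun t : ℝ => Freg c p α β (fun i j => π i j + t * E i j))
      ((∑ i, ∑ j, c i j * E i j) + α⁻¹ * (∑ i, rowSum E i * Real.log (rowSum π i / p i))
      + β⁻¹ * (∑ i, ∑ j, E i j * Real.log (π i j / piRef m n i j))) 0 := by
    unfold Freg
    refine HasDerivAt.add (HasDerivAt.add ?_ (HasDerivAt.const_mul _ ?_)) (HasDerivAt.const_mul _ ?_)
    · unfold frob
      refine HasDerivAt.fun_sum fun i _ => HasDerivAt.fun_sum fun j _ => ?_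
      have h1 : HasDerivAt (fun t : ℝ => π i j + t * E i j) (E i j) 0 := by
        simpa using ((hasDerivAt_id (0:ℝ)).mul_const (E i j)).const_add (π i j)
      exact h1.const_mul _
    · unfold KLvec
      refine HasDerivAt.fun_sum fun i _ => ?_
      have e : ∀ t : ℝ, rowSum (fun i j => π i j + t * E i j : Matrix (Fin m) (Fin n) ℝ) i
          = rowSum π i + t * rowSum E i := fun t => by
        simpa using rowSum_comb π E 1 t i
      simp only [e]
      by_cases hn : n = 0
      · subst hn
        simp [rowSum]
        exact hasDerivAt_const _ _
      · refine phi_deriv _ _ _ (hp.1 i) (Finset.sum_pos (fun j _ => hpos i j) ?_)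
        exact ⟨⟨0, Nat.pos_of_ne_zero hn⟩, Finset.mem_univ _⟩
    · unfold KLmat
      refine HasDerivAt.fun_sum fun i _ => HasDerivAt.fun_sum fun j _ => ?_
      refine phi_deriv _ _ _ ?_ (hpos i j)
      have hm : (0:ℝ) < m := by exact_mod_cast i.pos
      have hn : (0:ℝ) < n := by exact_mod_cast j.pos
      unfold piRef; positivity
  refine IsLocalMin.hasDerivAt_eq_zero ?_ hder
  have hev : ∀ᶠ t : ℝ in 𝓝 0, ∀ i j, 0 < π i j + t * E i j := by
    rw [Filter.eventually_all]; intro i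
    rw [Filter.eventually_all]; intro j
    have : ContinuousAt (fun t : ℝ => π i j + t * E i j) 0 := by fun_prop
    exact this.eventually (lt_mem_nhds (by simpa using hpos i j))
  filter_upwards [hev] with t ht
  simp only [zero_mul, add_zero]
  refine hopt _ ⟨fun i j => (ht i j).le, ?_⟩
  funext j
  have hj := congrFun hmem.2 j
  have hEj := congrFun hE j
  simp only [colSum, Pi.zero_apply] at hj hEj ⊢
  simp [Finset.sum_add_distrib, ← Finset.mul_sum, hj, hEj]

lemma reg_foc' {m n : ℕ} (p : Fin m → ℝ) (q : Fin n → ℝ) (c : Matrix (Fin m) (Fin n) ℝ)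
    (hp : p ∈ simplexPos m)
    (α β : ℝ)
    (π : Matrix (Fin m) (Fin n) ℝ)
    (hmem : π ∈ GammaStar q)
    (hopt : ∀ π' ∈ GammaStar (m := m) q, Freg c p α β π ≤ Freg c p α β π')
    (hpos : ∀ i j, 0 < π i j) (i k : Fin m) (j : Fin n) :
    c i j + α⁻¹ * Real.log (rowSum π i / p i) + β⁻¹ * Real.log (π i j / piRef m n i j) =
    c k j + α⁻¹ * Real.log (rowSum π k / p k) + β⁻¹ * Real.log (π k j / piRef m n k j) := by
  have h := reg_foc p q c hp α β π hmem hopt hpos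
    (fun a b => ((if a = i then 1 else 0) - (if a = k then 1 else 0)) * (if b = j then 1 else 0))
    (by funext b; simp [colSum, ← Finset.sum_mul])
  simp [rowSum, sub_mul, mul_sub, Finset.sum_sub_distrib] at h
  simp only [rowSum]
  linarith

lemma abs_sub_le_log (r p : ℝ) (hr : 0 < r) (hp : 0 < p) :
    |r - p| ≤ (r + p) * |Real.log (r / p)| := by
  have h1 := Real.log_le_sub_one_of_pos (div_pos hr hp)
  have h2 := Real.log_le_sub_one_of_pos (div_pos hp hr)
  have e : Real.log (p / r) = - Real.log (r / p) := by rw [← Real.log_inv, inv_div]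
  rw [e] at h2
  have h1' := mul_le_mul_of_nonneg_left h1 hp.le
  have h2' := mul_le_mul_of_nonneg_left h2 hr.le
  have e1 : p * (r / p - 1) = r - p := by field_simp
  have e2 : r * (p / r - 1) = p - r := by field_simp
  rw [e1] at h1'; rw [e2] at h2'
  have h3 := le_abs_self (Real.log (r / p))
  have h4 := neg_abs_le (Real.log (r / p))
  have h5 := abs_nonneg (Real.log (r / p))
  rw [abs_le]
  constructor <;> nlinarith

/-- Lemma 4: marginal error of the regularization path.
`‖π^reg𝟙 - p‖₁ ≤ (2αβ/(α+β))(4‖log p‖_∞/β + ‖c‖_osc)`. -/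
theorem regularization_path_marginal_error
    {m n : ℕ} (p : Fin m → ℝ) (q : Fin n → ℝ) (c : Matrix (Fin m) (Fin n) ℝ)
    (hp : p ∈ simplexPos m) (hq : q ∈ simplexPos n)
    (α β : ℝ) (hα : 0 < α) (hβ : 0 < β)
    (πreg : Matrix (Fin m) (Fin n) ℝ)
    (hπregmem : πreg ∈ GammaStar q)
    (hπregopt : ∀ π' ∈ GammaStar (m := m) q, Freg c p α β πreg ≤ Freg c p α β π') :
    l1vec (fun i => rowSum πreg i - p i) ≤
      (2 * α * β / (α + β)) * (4 * logSup p / β + cOsc c) := by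
  have hpos := reg_pos p q c hp hq α β hα hβ πreg hπregmem hπregopt
  have hfoc := reg_foc' p q c hp α β πreg hπregmem hπregopt hpos
  have hnne : Nonempty (Fin n) := by
    by_contra h
    rw [not_nonempty_iff] at h
    have := hq.2
    simp at this
  have hmne : Nonempty (Fin m) := by
    by_contra h
    rw [not_nonempty_iff] at h
    have := hp.2
    simp at this
  have hr : ∀ i, 0 < rowSum πreg i := fun i =>
    Finset.sum_pos (fun j _ => hpos i j) Finset.univ_nonempty
  have hrs : ∑ i, rowSum πreg i = 1 := by
    rw [← hq.2, ← hπregmem.2]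
    exact Finset.sum_comm
  have hL : ∀ i, |Real.log (p i)| ≤ logSup p := fun i =>
    le_ciSup (f := fun i => |Real.log (p i)|) (Set.finite_range _).bddAbove i
  have hc : ∀ i k j, c k j - c i j ≤ cOsc c := by
    intro i k j
    have h1 : c k j ≤ ⨆ i, ⨆ j, c i j :=
      (le_ciSup (f := fun j => c k j) (Set.finite_range _).bddAbove j).trans
        (le_ciSup (f := fun i => ⨆ j, c i j) (Set.finite_range _).bddAbove k)
    have h2 : ⨅ i, ⨅ j, c i j ≤ c i j :=
      (ciInf_le (f := fun i => ⨅ j, c i j) (Set.finite_range _).bddBelow i).trans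
        (ciInf_le (f := fun j => c i j) (Set.finite_range _).bddBelow j)
    unfold cOsc; linarith
  set r := rowSum πreg with hrdef
  set L := logSup p
  set O := cOsc c
  set x : Fin m → ℝ := fun i => Real.log (r i / p i) with hx
  have hL0 : 0 ≤ L := (abs_nonneg _).trans (hL hmne.some)
  set D := α * β / (α + β) * (4 * L / β + O) with hD
  have hpair : ∀ i k, x i - x k ≤ D := by
    intro i k
    have hlog : ∀ j, Real.log (πreg i j) ≤ Real.log (πreg k j) + (β * O - β / α * (x i - x k)) := by
      intro j
      have hm : (0:ℝ) < m := by exact_mod_cast i.pos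
      have hn : (0:ℝ) < n := by exact_mod_cast j.pos
      have hw : (1:ℝ) / (m * n) ≠ 0 := by positivity
      have h := hfoc i k j
      simp only [piRef] at h
      rw [Real.log_div (hpos i j).ne' hw, Real.log_div (hpos k j).ne' hw] at h
      have h' : α⁻¹ * (x i - x k) + β⁻¹ * (Real.log (πreg i j) - Real.log (πreg k j)) ≤ O := by
        have := hc i k j
        simp only [hx]
        linarith
      have h'' := mul_le_mul_of_nonneg_left h' hβ.le
      have e : β * (α⁻¹ * (x i - x k) + β⁻¹ * (Real.log (πreg i j) - Real.log (πreg k j)))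
        = β / α * (x i - x k) + (Real.log (πreg i j) - Real.log (πreg k j)) := by
        field_simp
      rw [e] at h''
      linarith
    have hsum : r i ≤ r k * Real.exp (β * O - β / α * (x i - x k)) := by
      simp only [hrdef, rowSum]
      rw [Finset.sum_mul]
      refine Finset.sum_le_sum fun j _ => ?_
      rw [← Real.log_le_log_iff (hpos i j) (mul_pos (hpos k j) (Real.exp_pos _)),
        Real.log_mul (hpos k j).ne' (Real.exp_ne_zero _), Real.log_exp]
      exact hlog j
    rw [← Real.log_le_log_iff (hr i) (mul_pos (hr k) (Real.exp_pos _)),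
        Real.log_mul (hr k).ne' (Real.exp_ne_zero _), Real.log_exp] at hsum
    have hxi : x i = Real.log (r i) - Real.log (p i) := Real.log_div (hr i).ne' (hp.1 i).ne'
    have hxk : x k = Real.log (r k) - Real.log (p k) := Real.log_div (hr k).ne' (hp.1 k).ne'
    have a1 := abs_le.1 (hL i)
    have a2 := abs_le.1 (hL k)
    have hfin : (x i - x k) + β / α * (x i - x k) ≤ β * O + 4 * L := by linarith
    have e : D = (β * O + 4 * L) * (α / (α + β)) := by
      rw [hD]; field_simp; ring
    rw [e]
    have e2 : x i - x k = ((x i - x k) + β / α * (x i - x k)) * (α / (α + β)) := by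
      field_simp
    rw [e2]
    exact mul_le_mul_of_nonneg_right hfin (by positivity)
  obtain ⟨i0, -, hi0⟩ := Finset.exists_le_of_sum_le (s := Finset.univ) (f := r) (g := p)
    Finset.univ_nonempty (by rw [hrs, hp.2])
  obtain ⟨k0, -, hk0⟩ := Finset.exists_le_of_sum_le (s := Finset.univ) (f := p) (g := r)
    Finset.univ_nonempty (by rw [hrs, hp.2])
  have hxi0 : x i0 ≤ 0 := Real.log_nonpos (div_pos (hr i0) (hp.1 i0)).le
    ((div_le_one (hp.1 i0)).2 hi0)
  have hxk0 : 0 ≤ x k0 := Real.log_nonneg ((one_le_div (hp.1 k0)).2 hk0)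
  have hxD : ∀ i, |x i| ≤ D := fun i => abs_le.2
    ⟨by have := hpair k0 i; linarith, by have := hpair i i0; linarith⟩
  have e : 2 * α * β / (α + β) * (4 * L / β + O) = ∑ i, (r i + p i) * D := by
    rw [← Finset.sum_mul, Finset.sum_add_distrib, hrs, hp.2, hD]; ring
  rw [e]
  unfold l1vec
  refine Finset.sum_le_sum fun i _ => (abs_sub_le_log _ _ (hr i) (hp.1 i)).trans ?_
  exact mul_le_mul_of_nonneg_left (hxD i) (add_pos (hr i) (hp.1 i)).le

end
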